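/- Let V be a finite set with distinguished distinct vertices s, t ∈ V, cap : V × V → ℝ≥0 symmetric vanishing on the diagonal, and μ a probability distribution on V. Let d be an st-separating semi-metric on V with Σ_{u,v∈V} μ(u)μ(v)·d(u,v) = 1, and suppose there exists o ∈ V such that the ball B = {v ∈ V : d(v,o) ≤ 1/4} satisfies μ(B) ≥ 1/2. Then there exists an st-separating cut (S, V∖S) with Σ_{u∈S,v∈V∖S} μ(u)μ(v) > 0 whose sparsity with respect to demands dem(u,v) = μ(u)μ(v) is at most 32·Σ_{u,v∈V} cap(u,v)·d(u,v). -/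

import Mathlib

/-!
An `L`-Lipschitz `f : V → ℝ` that is minimal at `s` and maximal at `t` yields an `st`-separating
cut: integrating the threshold cuts `{f ≤ x}` over `x` recovers `(f v - f u)⁺` (a discrete coarea
formula), so some threshold cut is at least as sparse as `f` is on average. Adding any 1-Lipschitz
`ρ` to `d(s, ·)` preserves the extrema at `s` and `t`, because `d(s, t) = d(s, v) + d(v, t)`. Take
`ρ = ±r`, where `r v = (d(v, o) - R)⁺` vanishes on the dense ball of radius `R`. The ball has large
mass and `r` has large mean, so `r` increases a lot on average, hence so does one of `d(s, ·) ± r`.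
-/

open Finset MeasureTheory
open scoped NNReal

theorem exists_pos_and_le_mul_of_integral_le {α : Type*} [MeasurableSpace α] {ν : Measure α}
    {C D : α → ℝ} {K : ℝ} (hC : Integrable C ν) (hD : Integrable D ν)
    (hC0 : ∀ x, 0 ≤ C x) (hD0 : ∀ x, 0 ≤ D x) (hpos : 0 < ∫ x, D x ∂ν)
    (hle : ∫ x, C x ∂ν ≤ K * ∫ x, D x ∂ν) :
    ∃ x, 0 < D x ∧ C x ≤ K * D x := by
  by_contra! hlt
  have hexcess : ∀ x, 0 ≤ C x - K * D x := fun x ↦ by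
    rcases (hD0 x).eq_or_lt with hx | hx
    · simpa [← hx] using hC0 x
    · exact sub_nonneg.2 (hlt x hx).le
  have hint : ∫ x, (C x - K * D x) ∂ν = 0 := by
    refine le_antisymm ?_ (integral_nonneg hexcess)
    rw [integral_sub hC (hD.const_mul K), integral_const_mul]
    exact sub_nonpos.2 hle
  have hae : D =ᵐ[ν] 0 := by
    filter_upwards [(integral_eq_zero_iff_of_nonneg hexcess (hC.sub (hD.const_mul K))).1 hint]
      with x (hx : C x - K * D x = 0)
    by_contra hne
    exact (hlt x ((hD0 x).lt_of_ne' hne)).ne' (sub_eq_zero.1 hx)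
  exact hpos.ne' (integral_eq_zero_of_ae hae)

theorem integrable_mul_indicator_Ico (c a b : ℝ) :
    Integrable fun x ↦ c * (Set.Ico a b).indicator (1 : ℝ → ℝ) x :=
  ((integrable_indicator_iff measurableSet_Ico).2
    (integrableOn_const measure_Ico_lt_top.ne)).const_mul c

section WeightedIncrease

variable {V : Type*} [Fintype V]

/-- The total increase of `f` over ordered pairs, weighted by `w`. For symmetric `w` it is half of
`∑ w u v |f u - f v|`; counting increases only lets the coarea formula
`integral_cutWeight_thresholdCut` hold for every `w`. -/
def weightedIncrease (w : V → V → ℝ) (f : V → ℝ) : ℝ :=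
  ∑ u, ∑ v, w u v * (f v - f u)⁺

theorem weightedIncrease_neg {w : V → V → ℝ} (hw : ∀ u v, w u v = w v u) (f : V → ℝ) :
    weightedIncrease w (-f) = weightedIncrease w f := by
  unfold weightedIncrease
  rw [sum_comm]
  refine sum_congr rfl fun u _ ↦ sum_congr rfl fun v _ ↦ ?_
  rw [hw, Pi.neg_apply, Pi.neg_apply, neg_sub_neg]

theorem weightedIncrease_add_le {w : V → V → ℝ} (hw : ∀ u v, 0 ≤ w u v) (f g : V → ℝ) :
    weightedIncrease w (f + g) ≤ weightedIncrease w f + weightedIncrease w g := by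
  simp only [weightedIncrease, ← sum_add_distrib, ← mul_add]
  gcongr with u _ v _
  · exact hw u v
  · calc ((f + g) v - (f + g) u)⁺ = (f v - f u + (g v - g u))⁺ := by
          rw [Pi.add_apply, Pi.add_apply, add_sub_add_comm]
      _ ≤ (f v - f u)⁺ + (g v - g u)⁺ := by
          simpa [posPart_def] using max_add_add_le_max_add_max (c := (0 : ℝ)) (d := 0)

theorem weightedIncrease_smul {c : ℝ} (hc : 0 ≤ c) (w : V → V → ℝ) (f : V → ℝ) :
    weightedIncrease w (c • f) = c * weightedIncrease w f := by
  simp only [weightedIncrease, mul_sum]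
  refine sum_congr rfl fun u _ ↦ sum_congr rfl fun v _ ↦ ?_
  rw [Pi.smul_apply, Pi.smul_apply, ← smul_sub, smul_eq_mul, posPart_def, posPart_def,
    mul_left_comm c, mul_max_of_nonneg _ _ hc, mul_zero]

theorem weightedIncrease_le_max_add_sub {w : V → V → ℝ} (hw : ∀ u v, 0 ≤ w u v)
    (hsymm : ∀ u v, w u v = w v u) (f g : V → ℝ) :
    weightedIncrease w g ≤ max (weightedIncrease w (f + g)) (weightedIncrease w (f - g)) := by
  have htwice : 2 * weightedIncrease w g ≤
      weightedIncrease w (f + g) + weightedIncrease w (f - g) :=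
    calc 2 * weightedIncrease w g = weightedIncrease w ((f + g) + -(f - g)) := by
          rw [← weightedIncrease_smul zero_le_two, two_smul]
          congr 1
          abel
      _ ≤ weightedIncrease w (f + g) + weightedIncrease w (-(f - g)) :=
          weightedIncrease_add_le hw _ _
      _ = weightedIncrease w (f + g) + weightedIncrease w (f - g) := by
          rw [weightedIncrease_neg hsymm]
  rw [le_max_iff]
  by_contra! hlt
  linarith

theorem sum_sum_mul_dist_nonneg [PseudoMetricSpace V] {w : V → V → ℝ} (hw : ∀ u v, 0 ≤ w u v) :
    0 ≤ ∑ u, ∑ v, w u v * dist u v :=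
  sum_nonneg fun u _ ↦ sum_nonneg fun v _ ↦ mul_nonneg (hw u v) dist_nonneg

theorem weightedIncrease_le_of_lipschitzWith [PseudoMetricSpace V] {w : V → V → ℝ}
    (hw : ∀ u v, 0 ≤ w u v) {f : V → ℝ} {L : ℝ≥0} (hf : LipschitzWith L f) :
    weightedIncrease w f ≤ L * ∑ u, ∑ v, w u v * dist u v := by
  simp only [weightedIncrease, mul_sum, mul_left_comm (L : ℝ)]
  gcongr with u _ v _
  · exact hw u v
  · calc (f v - f u)⁺ ≤ |f v - f u| := sup_le (le_abs_self _) (abs_nonneg _)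
      _ = dist (f u) (f v) := by rw [dist_comm, Real.dist_eq]
      _ ≤ L * dist u v := hf.dist_le_mul u v

end WeightedIncrease

section ThresholdCuts

variable {V : Type*} [Fintype V]

/-- The side `{f ≤ x}` of the cut of `V` obtained by thresholding `f` at `x`. -/
noncomputable def thresholdCut (f : V → ℝ) (x : ℝ) : Finset V :=
  {v | f v ≤ x}

theorem mem_thresholdCut {f : V → ℝ} {x : ℝ} {v : V} : v ∈ thresholdCut f x ↔ f v ≤ x := by
  simp [thresholdCut]

variable [DecidableEq V]

/-- The total weight `w(S, V ∖ S)` of the pairs leaving `S`: the capacity or the demand of a cut,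
depending on `w`. -/
def cutWeight (w : V → V → ℝ) (S : Finset V) : ℝ :=
  ∑ u ∈ S, ∑ v ∈ Sᶜ, w u v

theorem cutWeight_nonneg {w : V → V → ℝ} (hw : ∀ u v, 0 ≤ w u v) (S : Finset V) :
    0 ≤ cutWeight w S :=
  sum_nonneg fun u _ ↦ sum_nonneg fun v _ ↦ hw u v

theorem cutWeight_thresholdCut (w : V → V → ℝ) (f : V → ℝ) (x : ℝ) :
    cutWeight w (thresholdCut f x) =
      ∑ u, ∑ v, w u v * (Set.Ico (f u) (f v)).indicator 1 x := by
  rw [cutWeight, thresholdCut, compl_filter, sum_filter]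
  refine sum_congr rfl fun u _ ↦ ?_
  by_cases hu : f u ≤ x <;> simp [hu, sum_filter, Set.indicator_apply]

theorem integrable_cutWeight_thresholdCut (w : V → V → ℝ) (f : V → ℝ) :
    Integrable fun x ↦ cutWeight w (thresholdCut f x) := by
  simp only [cutWeight_thresholdCut]
  exact integrable_finsetSum _ fun u _ ↦ integrable_finsetSum _ fun v _ ↦
    integrable_mul_indicator_Ico _ _ _

theorem integral_cutWeight_thresholdCut (w : V → V → ℝ) (f : V → ℝ) :
    ∫ x, cutWeight w (thresholdCut f x) = weightedIncrease w f := by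
  simp only [cutWeight_thresholdCut]
  rw [integral_finsetSum _ fun u _ ↦ integrable_finsetSum _ fun v _ ↦
    integrable_mul_indicator_Ico _ _ _]
  refine sum_congr rfl fun u _ ↦ ?_
  rw [integral_finsetSum _ fun v _ ↦ integrable_mul_indicator_Ico _ _ _]
  refine sum_congr rfl fun v _ ↦ ?_
  rw [integral_const_mul, integral_indicator_one measurableSet_Ico, Real.volume_real_Ico,
    posPart_def]

theorem exists_sparse_thresholdCut {cap dem : V → V → ℝ} (hcap : ∀ u v, 0 ≤ cap u v)
    (hdem : ∀ u v, 0 ≤ dem u v) {f : V → ℝ} {K : ℝ} (hpos : 0 < weightedIncrease dem f)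
    (hle : weightedIncrease cap f ≤ K * weightedIncrease dem f) :
    ∃ x, 0 < cutWeight dem (thresholdCut f x) ∧
      cutWeight cap (thresholdCut f x) / cutWeight dem (thresholdCut f x) ≤ K := by
  simp only [← integral_cutWeight_thresholdCut] at hpos hle
  obtain ⟨x, hx, hxK⟩ := exists_pos_and_le_mul_of_integral_le
    (integrable_cutWeight_thresholdCut cap f) (integrable_cutWeight_thresholdCut dem f)
    (fun _ ↦ cutWeight_nonneg hcap _) (fun _ ↦ cutWeight_nonneg hdem _) hpos hle
  exact ⟨x, hx, (div_le_iff₀ hx).2 hxK⟩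

theorem mem_and_notMem_thresholdCut {w : V → V → ℝ} {f : V → ℝ} {x : ℝ} {s t : V}
    (hs : ∀ v, f s ≤ f v) (ht : ∀ v, f v ≤ f t) (hne : cutWeight w (thresholdCut f x) ≠ 0) :
    s ∈ thresholdCut f x ∧ t ∉ thresholdCut f x := by
  obtain ⟨u, hu, hsum⟩ := exists_ne_zero_of_sum_ne_zero hne
  obtain ⟨v, hv, -⟩ := exists_ne_zero_of_sum_ne_zero hsum
  simp only [mem_compl, mem_thresholdCut] at hu hv ⊢
  exact ⟨(hs u).trans hu, fun htx ↦ hv ((ht v).trans htx)⟩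

theorem exists_sparse_separating_cut_of_lipschitzWith [PseudoMetricSpace V]
    {cap dem : V → V → ℝ} (hcap : ∀ u v, 0 ≤ cap u v) (hdem : ∀ u v, 0 ≤ dem u v)
    {f : V → ℝ} {L : ℝ≥0} (hf : LipschitzWith L f) {s t : V} (hs : ∀ v, f s ≤ f v)
    (ht : ∀ v, f v ≤ f t) {σ : ℝ} (hσ : 0 < σ) (hσf : σ ≤ weightedIncrease dem f) :
    ∃ S, s ∈ S ∧ t ∉ S ∧ 0 < cutWeight dem S ∧
      cutWeight cap S / cutWeight dem S ≤ L / σ * ∑ u, ∑ v, cap u v * dist u v := by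
  set W := ∑ u, ∑ v, cap u v * dist u v
  have hW : 0 ≤ W := sum_sum_mul_dist_nonneg hcap
  have hle : weightedIncrease cap f ≤ L / σ * W * weightedIncrease dem f :=
    calc weightedIncrease cap f ≤ L * W := weightedIncrease_le_of_lipschitzWith hcap hf
      _ = L / σ * W * σ := by field_simp
      _ ≤ L / σ * W * weightedIncrease dem f := by gcongr
  obtain ⟨x, hx, hxle⟩ := exists_sparse_thresholdCut hcap hdem (hσ.trans_le hσf) hle
  obtain ⟨hsx, htx⟩ := mem_and_notMem_thresholdCut hs ht hx.ne'
  exact ⟨thresholdCut f x, hsx, htx, hx, hxle⟩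

end ThresholdCuts

section SeparatingMetric

variable {V : Type*} [PseudoMetricSpace V] {s t : V} {ρ : V → ℝ}

theorem dist_self_add_le_dist_add_of_lipschitzWith (hρ : LipschitzWith 1 ρ) (v : V) :
    dist s s + ρ s ≤ dist s v + ρ v := by
  rw [dist_self, zero_add, add_comm]
  simpa using hρ.le_add_mul s v

theorem dist_add_le_dist_add_of_lipschitzWith {v : V} (hsep : dist s t = dist s v + dist v t)
    (hρ : LipschitzWith 1 ρ) : dist s v + ρ v ≤ dist s t + ρ t := by
  rw [hsep, add_assoc, add_comm (dist v t)]
  simpa using hρ.le_add_mul v t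

theorem exists_sparse_separating_cut_of_dist_add [Fintype V] [DecidableEq V]
    {cap dem : V → V → ℝ} (hcap : ∀ u v, 0 ≤ cap u v) (hdem : ∀ u v, 0 ≤ dem u v)
    (hsep : ∀ v, dist s t = dist s v + dist v t) (hρ : LipschitzWith 1 ρ) {σ : ℝ} (hσ : 0 < σ)
    (hσρ : σ ≤ weightedIncrease dem (dist s + ρ)) :
    ∃ S, s ∈ S ∧ t ∉ S ∧ 0 < cutWeight dem S ∧
      cutWeight cap S / cutWeight dem S ≤ 2 / σ * ∑ u, ∑ v, cap u v * dist u v := by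
  have hf : LipschitzWith 2 (dist s + ρ) := by
    rw [← one_add_one_eq_two]
    exact (LipschitzWith.dist_right s).add hρ
  exact exists_sparse_separating_cut_of_lipschitzWith hcap hdem hf
    (dist_self_add_le_dist_add_of_lipschitzWith hρ)
    (fun v ↦ dist_add_le_dist_add_of_lipschitzWith (hsep v) hρ) hσ hσρ

end SeparatingMetric

section DenseBall

variable {V : Type*} [PseudoMetricSpace V]

theorem lipschitzWith_posPart_dist_sub (o : V) (R : ℝ) :
    LipschitzWith 1 fun v ↦ (dist v o - R)⁺ := by
  simpa [posPart_def] using ((LipschitzWith.dist_left o).sub (LipschitzWith.const R)).max_const 0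

variable [Fintype V] {μ : V → ℝ}

theorem sum_sum_mul_dist_le_two_mul (hμ0 : ∀ v, 0 ≤ μ v) (hμ1 : ∑ v, μ v = 1) (o : V) :
    ∑ u, ∑ v, μ u * μ v * dist u v ≤ 2 * ∑ v, μ v * dist v o :=
  calc ∑ u, ∑ v, μ u * μ v * dist u v
      ≤ ∑ u, ∑ v, μ u * μ v * (dist u o + dist v o) := by
        gcongr with u _ v _
        · exact mul_nonneg (hμ0 u) (hμ0 v)
        · exact dist_triangle_right u v o
    _ = ∑ u, ∑ v, (μ u * dist u o * μ v + μ u * (μ v * dist v o)) := by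
        congr! 2
        ring
    _ = 2 * ∑ v, μ v * dist v o := by
        simp only [sum_add_distrib, ← mul_sum, ← sum_mul, hμ1]
        ring

theorem half_sum_sum_mul_dist_sub_le (hμ0 : ∀ v, 0 ≤ μ v) (hμ1 : ∑ v, μ v = 1) (o : V) (R : ℝ) :
    (∑ u, ∑ v, μ u * μ v * dist u v) / 2 - R ≤ ∑ v, μ v * (dist v o - R)⁺ :=
  calc (∑ u, ∑ v, μ u * μ v * dist u v) / 2 - R
      ≤ ∑ v, μ v * dist v o - R := by linarith [sum_sum_mul_dist_le_two_mul hμ0 hμ1 o]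
    _ = ∑ v, μ v * (dist v o - R) := by
        simp only [mul_sub, sum_sub_distrib, ← sum_mul, hμ1, one_mul]
    _ ≤ ∑ v, μ v * (dist v o - R)⁺ :=
        sum_le_sum fun v _ ↦ mul_le_mul_of_nonneg_left (le_posPart _) (hμ0 v)

theorem ball_mul_sum_le_weightedIncrease (hμ0 : ∀ v, 0 ≤ μ v) (o : V) (R : ℝ) :
    (∑ v with dist v o ≤ R, μ v) * ∑ v, μ v * (dist v o - R)⁺ ≤
      weightedIncrease (fun u v ↦ μ u * μ v) fun v ↦ (dist v o - R)⁺ := by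
  have hterm : ∀ u v, 0 ≤ μ u * μ v * ((dist v o - R)⁺ - (dist u o - R)⁺)⁺ := fun u v ↦
    mul_nonneg (mul_nonneg (hμ0 u) (hμ0 v)) (posPart_nonneg _)
  rw [sum_mul_sum]
  refine (sum_le_sum fun u hu ↦ sum_le_sum fun v _ ↦ ?_).trans
    (sum_le_univ_sum_of_nonneg fun u ↦ sum_nonneg fun v _ ↦ hterm u v)
  have hzero : (dist u o - R)⁺ = 0 := posPart_eq_zero.2 (sub_nonpos.2 (mem_filter.1 hu).2)
  simp only [hzero]
  rw [sub_zero, posPart_of_nonneg (posPart_nonneg _), mul_assoc]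

theorem mul_sub_le_weightedIncrease_of_dense_ball (hμ0 : ∀ v, 0 ≤ μ v) (hμ1 : ∑ v, μ v = 1)
    {o : V} {R β : ℝ} (hβ : 0 ≤ β) (hball : β ≤ ∑ v with dist v o ≤ R, μ v) :
    β * ((∑ u, ∑ v, μ u * μ v * dist u v) / 2 - R) ≤
      weightedIncrease (fun u v ↦ μ u * μ v) fun v ↦ (dist v o - R)⁺ :=
  calc β * ((∑ u, ∑ v, μ u * μ v * dist u v) / 2 - R)
      ≤ β * ∑ v, μ v * (dist v o - R)⁺ := by
        gcongr
        exact half_sum_sum_mul_dist_sub_le hμ0 hμ1 o R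
    _ ≤ (∑ v with dist v o ≤ R, μ v) * ∑ v, μ v * (dist v o - R)⁺ := by
        gcongr
        exact sum_nonneg fun v _ ↦ mul_nonneg (hμ0 v) (posPart_nonneg _)
    _ ≤ _ := ball_mul_sum_le_weightedIncrease hμ0 o R

end DenseBall

theorem stmt9_general {V : Type*} [Fintype V] [DecidableEq V] [PseudoMetricSpace V] {s t : V}
    (hsep : ∀ v, dist s t = dist s v + dist v t)
    {cap : V → V → ℝ} (hcap : ∀ u v, 0 ≤ cap u v)
    {μ : V → ℝ} (hμ0 : ∀ v, 0 ≤ μ v) (hμ1 : ∑ v, μ v = 1)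
    {Δ : ℝ} (hΔ : ∑ u, ∑ v, μ u * μ v * dist u v = Δ)
    {o : V} {R β : ℝ} (hR : R < Δ / 2) (hβ : 0 < β)
    (hball : β ≤ ∑ v with dist v o ≤ R, μ v) :
    ∃ S, s ∈ S ∧ t ∉ S ∧ 0 < cutWeight (fun u v ↦ μ u * μ v) S ∧
      cutWeight cap S / cutWeight (fun u v ↦ μ u * μ v) S ≤
        2 / (β * (Δ / 2 - R)) * ∑ u, ∑ v, cap u v * dist u v := by
  have hdem : ∀ u v, 0 ≤ μ u * μ v := fun u v ↦ mul_nonneg (hμ0 u) (hμ0 v)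
  have hσ : 0 < β * (Δ / 2 - R) := mul_pos hβ (sub_pos.2 hR)
  set r : V → ℝ := fun v ↦ (dist v o - R)⁺
  have hr : LipschitzWith 1 r := lipschitzWith_posPart_dist_sub o R
  have hσr : β * (Δ / 2 - R) ≤ weightedIncrease (fun u v ↦ μ u * μ v) r :=
    hΔ ▸ mul_sub_le_weightedIncrease_of_dense_ball hμ0 hμ1 hβ.le hball
  have hmax := weightedIncrease_le_max_add_sub hdem (fun u v ↦ mul_comm (μ u) (μ v)) (dist s) r
  rcases le_max_iff.1 (hσr.trans hmax) with hadd | hsub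
  · exact exists_sparse_separating_cut_of_dist_add hcap hdem hsep hr hσ hadd
  · rw [sub_eq_add_neg] at hsub
    exact exists_sparse_separating_cut_of_dist_add hcap hdem hsep hr.neg hσ hsub

/-- Lemma 4.4 (`lmm_denseball`, the dense-ball case): if an `st`-separating
semi-metric `d` with `Σ μμ·d = 1` has a ball `B = {v : d(v,o) ≤ 1/4}` with
`μ(B) ≥ 1/2`, then there is an `st`-separating cut of positive product demand
whose sparsity is at most `32·Σ cap·d`. -/
theorem stmt9 {V : Type*} [Fintype V] [DecidableEq V] (s t : V) (hst : s ≠ t)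
    (cap : V → V → ℝ)
    (hcap0 : ∀ u v, 0 ≤ cap u v) (hcapsym : ∀ u v, cap u v = cap v u)
    (hcapdiag : ∀ v, cap v v = 0)
    (μ : V → ℝ) (hμ0 : ∀ v, 0 ≤ μ v) (hμ1 : ∑ v, μ v = 1)
    (d : V → V → ℝ) (hnn : ∀ u v, 0 ≤ d u v)
    (hsym : ∀ u v, d u v = d v u) (hdiag : ∀ v, d v v = 0)
    (htri : ∀ u v w, d u v ≤ d u w + d w v)
    (hsep : ∀ v, d s t = d s v + d v t)
    (hnorm : ∑ u, ∑ v, μ u * μ v * d u v = 1)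
    (o : V)
    (hball : (1 : ℝ) / 2 ≤ ∑ v ∈ Finset.univ.filter (fun v => d v o ≤ 1 / 4), μ v) :
    ∃ S : Finset V, S.Nonempty ∧ S ≠ Finset.univ ∧
      ((s ∈ S ∧ t ∉ S) ∨ (s ∉ S ∧ t ∈ S)) ∧
      (0 < ∑ u ∈ S, ∑ v ∈ Sᶜ, μ u * μ v) ∧
      (∑ u ∈ S, ∑ v ∈ Sᶜ, cap u v) / (∑ u ∈ S, ∑ v ∈ Sᶜ, μ u * μ v) ≤
        32 * ∑ u, ∑ v, cap u v * d u v := by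
  let _ : PseudoMetricSpace V :=
    { dist := d, dist_self := hdiag, dist_comm := hsym, dist_triangle := fun u v w ↦ htri u w v }
  obtain ⟨S, hs, ht, hdem, hle⟩ :=
    stmt9_general hsep hcap0 hμ0 hμ1 hnorm (by norm_num) one_half_pos hball
  exact ⟨S, ⟨s, hs⟩, fun h ↦ ht (h ▸ mem_univ t), Or.inl ⟨hs, ht⟩, hdem,
    hle.trans (mul_le_mul_of_nonneg_right (by norm_num) (sum_sum_mul_dist_nonneg hcap0))⟩
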